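/- arXiv:1906.00013 — 2 statements merged into one kernel-verified Lean document; each statement's English description precedes it below -/
import Mathlib

section
/- For every finite simple graph G with at least two vertices and at least one edge, treewidth(L(G)) + 1 ≤ vc(G), where vc(G) is the vertex congestion of G and L(G) is the line graph of G. -/
/-!
Given a tree embedding `(T, b)` of `G`, let the bag at a vertex `t` of `T` be the set of edges of
`G` whose routing contains `t`. This is a tree decomposition of the line graph over the same tree:
two edges of `G` sharing an endpoint `v` are both routed through the leaf `b v`, and the tree
vertices whose bag contains `e` are the vertices of the routing of `e`, a path. Its largest bag has
size `vc(T, b)`, which is positive because `G` has an edge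
(`treewidth_lineGraph_add_one_le_vcOf`).

Since `vcG` is an infimum of natural numbers, and `sInf ∅ = 0`, it must also be shown that some
tree embedding exists. For `k + 2` leaves, label the vertices of a tree by `0, …, 2 * k + 1` and
join every `j ≠ 0` to `j / 2` (`heapTree`). The vertices `1, …, k` have degree 3 and the others have
degree 1, which gives `k + 2` leaves (`exists_treeEmbedding`).
-/

open SimpleGraph Finset
open scoped Classical

noncomputable section

/-- A tree embedding of a simple graph `G` into a cubic tree on vertex type `W`:
a finite tree `T` all of whose vertices have degree 1 or 3, together with a bijection
`b` from the vertices of `G` to the leaves of `T`. -/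
structure TreeEmbedding {V : Type} (G : SimpleGraph V) (W : Type) [Fintype W] where
  T : SimpleGraph W
  b : V → W
  isTree : T.IsTree
  cubic : ∀ t : W, (T.neighborSet t).ncard = 1 ∨ (T.neighborSet t).ncard = 3
  leaf_b : ∀ v : V, (T.neighborSet (b v)).ncard = 1
  inj : Function.Injective b
  surj_leaf : ∀ t : W, (T.neighborSet t).ncard = 1 → ∃ v : V, b v = t

variable {V W : Type} [Fintype V] [Fintype W]

/-- The routing of the edge `e` of `G` passes through the vertex `t` of the tree. -/
def RoutesThruV {G : SimpleGraph V} (E : TreeEmbedding G W) (e : Sym2 V) (t : W) : Prop :=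
  ∃ u v : V, e = s(u, v) ∧ ∃ p : E.T.Walk (E.b u) (E.b v), p.IsPath ∧ t ∈ p.support

/-- The routing of the edge `e` of `G` passes through the edge `f` of the tree. -/
def RoutesThruE {G : SimpleGraph V} (E : TreeEmbedding G W) (e : Sym2 V) (f : Sym2 W) : Prop :=
  ∃ u v : V, e = s(u, v) ∧ ∃ p : E.T.Walk (E.b u) (E.b v), p.IsPath ∧ f ∈ p.edges

/-- The (weighted) congestion of a vertex `t` of the tree. -/
def conV {G : SimpleGraph V} (E : TreeEmbedding G W) (w : Sym2 V → ℕ) (t : W) : ℕ :=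
  ∑ e ∈ G.edgeFinset.filter (fun e => RoutesThruV E e t), w e

/-- The (weighted) congestion of an edge `f` of the tree. -/
def conE {G : SimpleGraph V} (E : TreeEmbedding G W) (w : Sym2 V → ℕ) (f : Sym2 W) : ℕ :=
  ∑ e ∈ G.edgeFinset.filter (fun e => RoutesThruE E e f), w e

/-- The vertex congestion of a tree embedding. -/
def vcOf {G : SimpleGraph V} (E : TreeEmbedding G W) (w : Sym2 V → ℕ) : ℕ :=
  Finset.univ.sup (conV E w)

/-- The edge congestion of a tree embedding. -/
def ecOf {G : SimpleGraph V} (E : TreeEmbedding G W) (w : Sym2 V → ℕ) : ℕ :=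
  E.T.edgeFinset.sup (conE E w)

/-- The vertex congestion of a graph: minimum over tree embeddings. -/
def vcG (G : SimpleGraph V) (w : Sym2 V → ℕ) : ℕ :=
  sInf {k | ∃ (n : ℕ) (E : TreeEmbedding G (Fin n)), vcOf E w = k}

/-- The edge congestion of a graph: minimum over tree embeddings. -/
def ecG (G : SimpleGraph V) (w : Sym2 V → ℕ) : ℕ :=
  sInf {k | ∃ (n : ℕ) (E : TreeEmbedding G (Fin n)), ecOf E w = k}

/-- A branch decomposition of a simple graph `H`: a cubic tree together with a bijection
from the edges of `H` to the leaves of the tree. -/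
structure BranchDecomp {U : Type} (H : SimpleGraph U) (W : Type) [Fintype W] where
  T : SimpleGraph W
  b : H.edgeSet → W
  isTree : T.IsTree
  cubic : ∀ t : W, (T.neighborSet t).ncard = 1 ∨ (T.neighborSet t).ncard = 3
  leaf_b : ∀ e : H.edgeSet, (T.neighborSet (b e)).ncard = 1
  inj : Function.Injective b
  surj_leaf : ∀ t : W, (T.neighborSet t).ncard = 1 → ∃ e : H.edgeSet, b e = t

variable {U : Type} [Fintype U]

/-- The vertex `t` of the tree lies on the subtree `S_v` (the minimal subtree of `T`
containing all leaves `b e` with `e` incident to `v`). -/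
def InSubtreeV {H : SimpleGraph U} {W : Type} [Fintype W] (D : BranchDecomp H W) (v : U)
    (t : W) : Prop :=
  ∃ e₁ e₂ : H.edgeSet, v ∈ (e₁ : Sym2 U) ∧ v ∈ (e₂ : Sym2 U) ∧
    ∃ p : D.T.Walk (D.b e₁) (D.b e₂), p.IsPath ∧ t ∈ p.support

/-- The edge `f` of the tree lies on the subtree `S_v`. -/
def InSubtreeE {H : SimpleGraph U} {W : Type} [Fintype W] (D : BranchDecomp H W) (v : U)
    (f : Sym2 W) : Prop :=
  ∃ e₁ e₂ : H.edgeSet, v ∈ (e₁ : Sym2 U) ∧ v ∈ (e₂ : Sym2 U) ∧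
    ∃ p : D.T.Walk (D.b e₁) (D.b e₂), p.IsPath ∧ f ∈ p.edges

/-- The width of an edge `f` of the tree of a branch decomposition. -/
def widthE {H : SimpleGraph U} {W : Type} [Fintype W] (D : BranchDecomp H W) (f : Sym2 W) : ℕ :=
  (Finset.univ.filter (fun v : U => InSubtreeE D v f)).card

/-- The width of a branch decomposition. -/
def widthOf {H : SimpleGraph U} {W : Type} [Fintype W] (D : BranchDecomp H W) : ℕ :=
  D.T.edgeFinset.sup (widthE D)

/-- The branchwidth of a simple graph (0 if it admits no branch decomposition). -/
def branchwidth (H : SimpleGraph U) : ℕ :=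
  sInf {k | ∃ (n : ℕ) (D : BranchDecomp H (Fin n)), widthOf D = k}

/-- The maximum degree of a finite simple graph. -/
def maxDeg (G : SimpleGraph V) : ℕ :=
  Finset.univ.sup (fun v => (G.neighborSet v).ncard)

/-- The weighted degree of a vertex. -/
def degw (G : SimpleGraph V) (w : Sym2 V → ℕ) (v : V) : ℕ :=
  ∑ e ∈ G.edgeFinset.filter (fun e => v ∈ e), w e

end

/-- A tree decomposition of `H`: a finite tree `T` with bags `X t ⊆ V(H)` such that every edge
of `H` has both endpoints in some common bag, and for every vertex of `H` the set of tree
vertices whose bag contains it is nonempty and induces a connected subtree of `T`. -/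
def IsTreeDecomp {U W : Type} (H : SimpleGraph U) (T : SimpleGraph W) (X : W → Set U) : Prop :=
  T.IsTree ∧
  (∀ u v : U, H.Adj u v → ∃ t : W, u ∈ X t ∧ v ∈ X t) ∧
  (∀ v : U, (T.induce {t : W | v ∈ X t}).Connected)

/-- The treewidth of a finite simple graph: the minimum, over tree decompositions, of the
maximum bag size minus one. -/
noncomputable def treewidth {U : Type} (H : SimpleGraph U) : ℕ :=
  sInf {k | ∃ (n : ℕ) (T : SimpleGraph (Fin n)) (X : Fin n → Set U),
    IsTreeDecomp H T X ∧ (Finset.univ.sup fun t => (X t).ncard) - 1 = k}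

/-! ### Existence of tree embeddings -/

/-- The tree on `0, …, 2 * k + 1` in which every `j ≠ 0` is joined to `j / 2`: the complete binary
tree in heap order rooted at `1`, with an additional leaf `0` attached to the root. -/
def heapTree (k : ℕ) : SimpleGraph (Fin (2 * k + 2)) where
  Adj i j := i ≠ j ∧ ((i : ℕ) = (j : ℕ) / 2 ∨ (j : ℕ) = (i : ℕ) / 2)
  symm := ⟨fun _ _ h => ⟨h.1.symm, h.2.symm⟩⟩
  loopless := ⟨fun _ h => h.1 rfl⟩

lemma heapTree_adj {k : ℕ} {i j : Fin (2 * k + 2)} : (heapTree k).Adj i j ↔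
    (i : ℕ) ≠ j ∧ ((i : ℕ) = (j : ℕ) / 2 ∨ (j : ℕ) = (i : ℕ) / 2) := by
  simp [heapTree, Fin.ext_iff]

lemma heapTree_connected (k : ℕ) : (heapTree k).Connected := by
  have key : ∀ (m : ℕ) (hm : m < 2 * k + 2), (heapTree k).Reachable ⟨m, hm⟩ ⟨0, by omega⟩ := by
    intro m
    induction m using Nat.strong_induction_on with
    | _ m ih =>
      intro hm
      rcases Nat.eq_zero_or_pos m with rfl | h0
      · exact Reachable.refl _
      · have hadj : (heapTree k).Adj ⟨m, hm⟩ ⟨m / 2, by omega⟩ :=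
          heapTree_adj.2 ⟨(Nat.div_lt_self h0 one_lt_two).ne', Or.inr rfl⟩
        exact hadj.reachable.trans (ih (m / 2) (by omega) _)
  exact (connected_iff _).2 ⟨fun i j => (key i i.2).trans (key j j.2).symm, ⟨⟨0, by omega⟩⟩⟩

lemma heapTree_isTree (k : ℕ) : (heapTree k).IsTree := by
  rw [isTree_iff_connected_and_card]
  refine ⟨heapTree_connected k, le_antisymm ?_
    (heapTree_connected k).card_vert_le_card_edgeSet_add_one⟩
  -- Every edge joins some nonzero `j` to `j / 2`, so there are at most `2 * k + 1` edges.
  have hsub : (heapTree k).edgeSet ⊆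
      Set.range (fun j : Fin (2 * k + 1) =>
        (s(⟨j + 1, by omega⟩, ⟨(j + 1) / 2, by omega⟩) : Sym2 (Fin (2 * k + 2)))) := by
    intro e
    induction e using Sym2.ind with
    | _ a b =>
      rw [mem_edgeSet, heapTree_adj]
      rintro ⟨hne, h | h⟩
      · refine ⟨⟨b - 1, by omega⟩, ?_⟩
        simp only [Sym2.eq_iff, Fin.ext_iff]
        omega
      · refine ⟨⟨a - 1, by omega⟩, ?_⟩
        simp only [Sym2.eq_iff, Fin.ext_iff]
        omega
  have h1 := Set.ncard_le_ncard hsub (Set.toFinite _)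
  have h2 := Finite.card_range_le (fun j : Fin (2 * k + 1) =>
        (s(⟨j + 1, by omega⟩, ⟨(j + 1) / 2, by omega⟩) : Sym2 (Fin (2 * k + 2))))
  rw [Nat.card_coe_set_eq, Nat.card_fin] at h2 ⊢
  omega

lemma heapTree_ncard_leaf {k : ℕ} {i : Fin (2 * k + 2)} (hi : (i : ℕ) = 0 ∨ k < i) :
    ((heapTree k).neighborSet i).ncard = 1 := by
  rw [Set.ncard_eq_one]
  rcases hi with hi | hi
  · refine ⟨⟨1, by omega⟩, ?_⟩
    ext j
    simp only [mem_neighborSet, heapTree_adj, Set.mem_singleton_iff, Fin.ext_iff]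
    omega
  · refine ⟨⟨i / 2, by omega⟩, ?_⟩
    ext j
    simp only [mem_neighborSet, heapTree_adj, Set.mem_singleton_iff, Fin.ext_iff]
    omega

lemma heapTree_ncard_internal {k : ℕ} {i : Fin (2 * k + 2)} (h0 : (i : ℕ) ≠ 0) (hi : (i : ℕ) ≤ k) :
    ((heapTree k).neighborSet i).ncard = 3 := by
  rw [Set.ncard_eq_three]
  refine ⟨⟨i / 2, by omega⟩, ⟨2 * i, by omega⟩, ⟨2 * i + 1, by omega⟩, ?_, ?_, ?_, ?_⟩
  · simp only [ne_eq, Fin.ext_iff]; omega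
  · simp only [ne_eq, Fin.ext_iff]; omega
  · simp only [ne_eq, Fin.ext_iff]; omega
  · ext j
    simp only [mem_neighborSet, heapTree_adj, Set.mem_insert_iff, Set.mem_singleton_iff,
      Fin.ext_iff]
    omega

lemma heapTree_leaf_iff {k : ℕ} {i : Fin (2 * k + 2)} :
    ((heapTree k).neighborSet i).ncard = 1 ↔ (i : ℕ) = 0 ∨ k < i := by
  refine ⟨fun h => ?_, heapTree_ncard_leaf⟩
  by_contra hc
  have := heapTree_ncard_internal (k := k) (i := i) (by omega) (by omega)
  omega

lemma exists_treeEmbedding {V : Type} [Fintype V] (G : SimpleGraph V) (hV : 2 ≤ Fintype.card V) :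
    ∃ n : ℕ, Nonempty (TreeEmbedding G (Fin n)) := by
  obtain ⟨k, hk⟩ := Nat.exists_eq_add_of_le' hV
  let φ : V ≃ Fin (k + 2) := Fintype.equivFinOfCardEq hk
  -- The leaves are `0` and `k + 1, …, 2 * k + 1`; they are enumerated by `0 ↦ 0` and `j ↦ k + j`.
  let c : Fin (k + 2) → Fin (2 * k + 2) := fun j =>
    if (j : ℕ) = 0 then ⟨0, by omega⟩ else ⟨k + j, by omega⟩
  have hc : ∀ j, (c j : ℕ) = if (j : ℕ) = 0 then 0 else k + j := fun j => by
    simp only [c]; split_ifs <;> rfl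
  refine ⟨2 * k + 2, ⟨⟨heapTree k, fun v => c (φ v), heapTree_isTree k, ?_, ?_, ?_, ?_⟩⟩⟩
  · intro t
    by_cases h : (t : ℕ) = 0 ∨ k < t
    · exact Or.inl (heapTree_ncard_leaf h)
    · exact Or.inr (heapTree_ncard_internal (by omega) (by omega))
  · intro v
    rw [heapTree_leaf_iff, hc]
    split_ifs <;> omega
  · intro u v huv
    apply φ.injective
    have h : (c (φ u) : ℕ) = c (φ v) := congrArg Fin.val huv
    rw [hc, hc] at h
    apply Fin.ext
    split_ifs at h <;> omega
  · intro t ht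
    rw [heapTree_leaf_iff] at ht
    have key : ∀ j : Fin (k + 2), (c j : ℕ) = t → ∃ v, c (φ v) = t := fun j hj =>
      ⟨φ.symm j, by rw [Equiv.apply_symm_apply]; exact Fin.ext hj⟩
    rcases ht with h0 | h1
    · exact key ⟨0, by omega⟩ (by rw [hc]; simp [h0])
    · refine key ⟨t - k, by omega⟩ ?_
      rw [hc]
      simp only
      split_ifs <;> omega

/-! ### The tree decomposition given by the routings -/

/-- The bag at `t`: the edges of `G` whose routing contains `t`. -/
def routingBag {V W : Type} [Fintype W] {G : SimpleGraph V} (E : TreeEmbedding G W) (t : W) :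
    Set G.edgeSet :=
  {e | RoutesThruV E e t}

/-- An edge is routed through the vertices of any path between the leaves of its endpoints, because
that path is unique. -/
lemma routesThruV_iff {V W : Type} [Fintype W] {G : SimpleGraph V} (E : TreeEmbedding G W)
    {u v : V} (p : E.T.Walk (E.b u) (E.b v)) (hp : p.IsPath) (t : W) :
    RoutesThruV E s(u, v) t ↔ t ∈ p.support := by
  refine ⟨?_, fun h => ⟨u, v, rfl, p, hp, h⟩⟩
  rintro ⟨u', v', he, q, hq, ht⟩
  rw [Sym2.eq_iff] at he
  rcases he with ⟨rfl, rfl⟩ | ⟨rfl, rfl⟩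
  · have := congrArg Subtype.val ((E.isTree.isAcyclic.subsingleton_path _ _).elim ⟨p, hp⟩ ⟨q, hq⟩)
    simp only at this
    rwa [this]
  · have := congrArg Subtype.val ((E.isTree.isAcyclic.subsingleton_path _ _).elim ⟨p, hp⟩ ⟨q.reverse, hq.reverse⟩)
    simp only at this
    rw [this, Walk.support_reverse]
    simpa using ht

lemma routesThruV_leaf {V W : Type} [Fintype W] {G : SimpleGraph V} (E : TreeEmbedding G W)
    {e : Sym2 V} {v : V} (hv : v ∈ e) : RoutesThruV E e (E.b v) := by
  obtain ⟨w, rfl⟩ := hv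
  obtain ⟨p, hp⟩ := E.isTree.connected.exists_isPath (E.b v) (E.b w)
  exact (routesThruV_iff E p hp _).2 p.start_mem_support

lemma isTreeDecomp_routingBag {V W : Type} [Fintype W] {G : SimpleGraph V}
    (E : TreeEmbedding G W) : IsTreeDecomp G.lineGraph E.T (routingBag E) := by
  refine ⟨E.isTree, ?_, ?_⟩
  · intro e f hef
    obtain ⟨-, v, he, hf⟩ := lineGraph_adj_iff_exists.1 hef
    exact ⟨E.b v, routesThruV_leaf E he, routesThruV_leaf E hf⟩
  · rintro ⟨e, he⟩
    induction e using Sym2.ind with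
    | _ u v =>
      obtain ⟨p, hp⟩ := E.isTree.connected.exists_isPath (E.b u) (E.b v)
      have hset : {t : W | (⟨s(u, v), he⟩ : G.edgeSet) ∈ routingBag E t} = {t | t ∈ p.support} := by
        ext t
        exact routesThruV_iff E p hp t
      rw [hset]
      exact p.connected_induce_support

lemma ncard_routingBag {V W : Type} [Fintype V] [Fintype W] {G : SimpleGraph V}
    (E : TreeEmbedding G W) (t : W) : (routingBag E t).ncard = conV E (fun _ => 1) t := by
  rw [conV, Finset.sum_const, smul_eq_mul, mul_one,
    ← Set.ncard_image_of_injective _ Subtype.val_injective, ← Set.ncard_coe_finset]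
  congr 1
  ext e
  simp [routingBag, and_comm]

lemma treewidth_lineGraph_add_one_le_vcOf {V : Type} [Fintype V] {G : SimpleGraph V}
    (hE : G.edgeSet.Nonempty) {n : ℕ} (E : TreeEmbedding G (Fin n)) :
    treewidth G.lineGraph + 1 ≤ vcOf E (fun _ => 1) := by
  have hsup : (Finset.univ.sup fun t => (routingBag E t).ncard) = vcOf E (fun _ => 1) := by
    simp only [ncard_routingBag, vcOf]
  have hle : treewidth G.lineGraph ≤ vcOf E (fun _ => 1) - 1 :=
    Nat.sInf_le ⟨n, E.T, routingBag E, isTreeDecomp_routingBag E, by rw [hsup]⟩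
  -- The bag at the leaf of an endpoint of an edge is nonempty, so subtracting 1 does not truncate.
  have hpos : 0 < vcOf E (fun _ => 1) := by
    obtain ⟨e, he⟩ := hE
    induction e using Sym2.ind with
    | _ u v =>
      have hmem : (⟨s(u, v), he⟩ : G.edgeSet) ∈ routingBag E (E.b u) :=
        routesThruV_leaf E (Sym2.mem_mk_left u v)
      have h1 : 0 < (routingBag E (E.b u)).ncard :=
        (Set.ncard_pos (Set.toFinite _)).2 ⟨_, hmem⟩
      rw [← hsup]
      exact h1.trans_le
        (Finset.le_sup (f := fun t => (routingBag E t).ncard) (Finset.mem_univ (E.b u)))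
  omega

theorem treewidth_lineGraph_add_one_le_vc {V : Type} [Fintype V] (G : SimpleGraph V)
    (hV : 2 ≤ Fintype.card V) (hE : G.edgeSet.Nonempty) :
    treewidth G.lineGraph + 1 ≤ vcG G (fun _ => 1) := by
  obtain ⟨n, ⟨E⟩⟩ := exists_treeEmbedding G hV
  -- The infimum of a nonempty set of naturals is attained.
  obtain ⟨m, F, hF⟩ := Nat.sInf_mem
    (s := {k | ∃ (n : ℕ) (E : TreeEmbedding G (Fin n)), vcOf E (fun _ => 1) = k}) ⟨_, n, E, rfl⟩
  exact (treewidth_lineGraph_add_one_le_vcOf hE F).trans_eq hF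
end

section
/- Let G be a finite simple graph with at least three vertices, let w : E(G) → ℕ be edge weights, and let (T,b) be a tree embedding of G. If t is an internal (degree-3) vertex of T adjacent in T to the two leaves b(v₁) and b(v₂) for distinct vertices v₁, v₂ of G, then con(t) = deg(v₁) + deg(v₂) − w({v₁,v₂}), where w({v₁,v₂}) is taken to be 0 if {v₁,v₂} is not an edge of G; equivalently, con(t) equals the total weight of the edges of G crossing the tripartition ({v₁}, {v₂}, V(G)∖{v₁,v₂}). -/
/-!
An edge of `G` is routed through `t` exactly when it is incident to `v₁` or `v₂`; both formulas for
`conV E w t` follow, the first one by inclusion-exclusion.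

A path meeting a vertex `s` other than at its ends contains two distinct neighbours of `s`
(`exists_two_neighbors_of_mem_path`). Hence leaves of `T` are never interior to a path. A routing
through `t` has `t` as an interior vertex, because its ends are leaves, so it uses two of the three
neighbours of `t`; one of these two is the leaf `b v₁` or `b v₂`, which must then be an end of the
routing. Conversely a path starting at `b vᵢ` has to continue to `t`, its only neighbour.
-/

open SimpleGraph Finset
open scoped Classical

theorem exists_two_neighbors_of_mem_path {W : Type} {T : SimpleGraph W} {a c : W}
    (p : T.Walk a c) (hp : p.IsPath) (s : W) (hs : s ∈ p.support) (hsa : s ≠ a) (hsc : s ≠ c) :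
    ∃ x y, x ≠ y ∧ T.Adj s x ∧ T.Adj s y ∧ x ∈ p.support ∧ y ∈ p.support := by
  induction p with
  | nil => simp_all
  | @cons a m c h q ih =>
    rw [Walk.cons_isPath_iff] at hp
    have hsq : s ∈ q.support := by simpa [hsa] using hs
    by_cases hsm : s = m
    · subst hsm
      -- Here `s` is the second vertex: its neighbours on the path are the first and the third.
      cases q with
      | nil => exact absurd rfl hsc
      | @cons _ n _ h' r =>
        refine ⟨a, n, ?_, h.symm, h', by simp, by simp⟩
        rintro rfl
        exact hp.2 (by simp)
    · obtain ⟨x, y, hxy, hx, hy, hxp, hyp⟩ := ih hp.1 hsq hsm hsc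
      exact ⟨x, y, hxy, hx, hy, by simp [hxp], by simp [hyp]⟩

theorem eq_end_of_leaf_mem_path {W : Type} {T : SimpleGraph W} {a c : W}
    (p : T.Walk a c) (hp : p.IsPath) (s : W) (hs : s ∈ p.support)
    (hleaf : (T.neighborSet s).ncard = 1) : s = a ∨ s = c := by
  by_contra! hcon
  obtain ⟨x, y, hxy, hx, hy, -, -⟩ := exists_two_neighbors_of_mem_path p hp s hs hcon.1 hcon.2
  obtain ⟨z, hz⟩ := Set.ncard_eq_one.mp hleaf
  have hxz : x ∈ T.neighborSet s := hx
  have hyz : y ∈ T.neighborSet s := hy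
  rw [hz] at hxz hyz
  exact hxy (hxz.trans hyz.symm)

theorem routesThruV_of_mem {V W : Type} [Fintype W] {G : SimpleGraph V}
    (E : TreeEmbedding G W) (t : W) (v : V) (h : E.T.Adj t (E.b v)) (e : Sym2 V)
    (he : e ∈ G.edgeSet) (hv : v ∈ e) : RoutesThruV E e t := by
  obtain ⟨u, rfl⟩ := Sym2.mem_iff_exists.mp hv
  have hne : v ≠ u := G.ne_of_adj he
  obtain ⟨p, hp, -⟩ := E.isTree.existsUnique_path (E.b v) (E.b u)
  refine ⟨v, u, rfl, p, hp, ?_⟩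
  have key : ∀ {a c : W} (p : E.T.Walk a c), a ≠ c → (E.T.neighborSet a).ncard = 1 →
      E.T.Adj t a → t ∈ p.support := by
    intro a c p hac ha hta
    cases p with
    | nil => exact absurd rfl hac
    | @cons _ m _ h' q =>
      obtain ⟨z, hz⟩ := Set.ncard_eq_one.mp ha
      have h1 : m ∈ E.T.neighborSet a := h'
      have h2 : t ∈ E.T.neighborSet a := hta.symm
      rw [hz] at h1 h2
      have htm : t = m := h2.trans h1.symm
      simp [htm]
  exact key p (fun hb => hne (E.inj hb)) (E.leaf_b v) h

theorem mem_or_mem_of_routesThruV {V W : Type} [Fintype W] {G : SimpleGraph V}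
    (E : TreeEmbedding G W) (t : W) (ht : (E.T.neighborSet t).ncard = 3)
    (v₁ v₂ : V) (hne : v₁ ≠ v₂)
    (h₁ : E.T.Adj t (E.b v₁)) (h₂ : E.T.Adj t (E.b v₂)) (e : Sym2 V)
    (he : RoutesThruV E e t) : v₁ ∈ e ∨ v₂ ∈ e := by
  obtain ⟨u, v, rfl, p, hp, htp⟩ := he
  have hleaf : ∀ x, t ≠ E.b x := by
    rintro x rfl
    have := E.leaf_b x
    omega
  obtain ⟨x, y, hxy, hx, hy, hxp, hyp⟩ :=
    exists_two_neighbors_of_mem_path p hp t htp (hleaf u) (hleaf v)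
  have hend : ∀ z, E.b z ∈ p.support → z ∈ s(u, v) := by
    intro z hz
    rcases eq_end_of_leaf_mem_path p hp _ hz (E.leaf_b z) with h | h
    · simp [E.inj h]
    · simp [E.inj h]
  by_contra! hcon
  have hp1 : E.b v₁ ∉ p.support := fun h => hcon.1 (hend _ h)
  have hp2 : E.b v₂ ∉ p.support := fun h => hcon.2 (hend _ h)
  -- Otherwise `b v₁`, `b v₂`, `x`, `y` would be four neighbours of `t`.
  have hsub : (({E.b v₁, E.b v₂, x, y} : Finset W) : Set W) ⊆ E.T.neighborSet t := by
    intro z hz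
    simp only [coe_insert, coe_singleton, Set.mem_insert_iff, Set.mem_singleton_iff] at hz
    rcases hz with rfl | rfl | rfl | rfl <;> assumption
  have hcard := Set.ncard_le_ncard hsub (Set.toFinite _)
  have h12 : E.b v₁ ≠ E.b v₂ := fun h => hne (E.inj h)
  have h1x : E.b v₁ ≠ x := fun h => hp1 (h ▸ hxp)
  have h1y : E.b v₁ ≠ y := fun h => hp1 (h ▸ hyp)
  have h2x : E.b v₂ ≠ x := fun h => hp2 (h ▸ hxp)
  have h2y : E.b v₂ ≠ y := fun h => hp2 (h ▸ hyp)
  have h4 : ({E.b v₁, E.b v₂, x, y} : Finset W).card = 4 := by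
    simp [h12, h1x, h1y, h2x, h2y, hxy]
  rw [Set.ncard_coe_finset, h4] at hcard
  omega

theorem conV_of_close_leaves {V : Type} [Fintype V] (G : SimpleGraph V)
    (hV : 3 ≤ Fintype.card V) (w : Sym2 V → ℕ)
    {W : Type} [Fintype W] (E : TreeEmbedding G W)
    (t : W) (ht : (E.T.neighborSet t).ncard = 3)
    (v₁ v₂ : V) (hne : v₁ ≠ v₂)
    (h₁ : E.T.Adj t (E.b v₁)) (h₂ : E.T.Adj t (E.b v₂)) :
    conV E w t =
        degw G w v₁ + degw G w v₂
          - (if s(v₁, v₂) ∈ G.edgeSet then w s(v₁, v₂) else 0) ∧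
      conV E w t = ∑ e ∈ G.edgeFinset.filter (fun e => v₁ ∈ e ∨ v₂ ∈ e), w e := by
  have hcon : conV E w t = ∑ e ∈ G.edgeFinset.filter (fun e => v₁ ∈ e ∨ v₂ ∈ e), w e := by
    unfold conV
    refine Finset.sum_congr (Finset.filter_congr fun e he => ⟨?_, ?_⟩) fun _ _ => rfl
    · exact mem_or_mem_of_routesThruV E t ht v₁ v₂ hne h₁ h₂ e
    · rw [SimpleGraph.mem_edgeFinset] at he
      rintro (h | h)
      · exact routesThruV_of_mem E t v₁ h₁ e he h
      · exact routesThruV_of_mem E t v₂ h₂ e he h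
  refine ⟨?_, hcon⟩
  have hboth : ∑ e ∈ G.edgeFinset.filter (fun e => v₁ ∈ e ∧ v₂ ∈ e), w e =
      if s(v₁, v₂) ∈ G.edgeSet then w s(v₁, v₂) else 0 := by
    simp only [Sym2.mem_and_mem_iff hne]
    rw [Finset.sum_filter, Finset.sum_ite_eq']
    simp only [SimpleGraph.mem_edgeFinset]
  have hie := Finset.sum_union_inter (f := w)
    (s₁ := G.edgeFinset.filter (fun e => v₁ ∈ e)) (s₂ := G.edgeFinset.filter (fun e => v₂ ∈ e))
  rw [← Finset.filter_or, ← Finset.filter_and, hboth, ← hcon] at hie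
  exact Nat.eq_sub_of_add_eq hie
end
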